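/- Let φ : ℝ^d → ℝ be differentiable and convex, let F : ℝ^d → ℝ be differentiable and L_F-smooth adaptable with respect to φ on ℝ^d, let R : ℝ^d → ℝ ∪ {+∞} be proper and convex, and set Φ := F + R. Let α > 0, let x ∈ ℝ^d with R(x) < +∞, let ∇̃ ∈ ℝ^d, set ε := ∇F(x) − ∇̃, and let x⁺ satisfy ∇φ(x) − α∇̃ − ∇φ(x⁺) ∈ α∂R(x⁺). Then Φ(x⁺) ≤ Φ(x) − (1/α)·D_φ(x, x⁺) − (1/α − L_F)·D_φ(x⁺, x) + ⟨ε, x⁺ − x⟩. -/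

import Mathlib

open scoped RealInnerProductSpace

/-
Convexity of `L φ - F` says that its Bregman distance `L D_φ - D_F` is nonnegative, which bounds
`F x⁺` by its linearization at `x` plus `L D_φ(x⁺, x)`. The subgradient inequality at `x⁺`, tested
at `x`, bounds `R x⁺ - R x` by `⟨∇̃, x - x⁺⟩ - α⁻¹ ⟨∇φ x - ∇φ x⁺, x - x⁺⟩`, and the last pairing is
`D_φ(x, x⁺) + D_φ(x⁺, x)`. Adding the two bounds gives the descent estimate.
-/

section BregmanDistance

variable {E : Type*} [NormedAddCommGroup E] [NormedSpace ℝ E] {s : Set E} {f g : E → ℝ} {x y : E}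

/-- The Bregman distance `D_φ(x, y)`, with the gradient of `φ` at `y` taken as an element of the
dual space, so that no inner product is required. It is meaningful only where `φ` is differentiable
at `y`, since `fderiv` is `0` elsewhere. -/
noncomputable def bregmanDist (φ : E → ℝ) (x y : E) : ℝ :=
  φ x - φ y - fderiv ℝ φ y (x - y)

/-- `v` is a subgradient at `y` of the extended-real-valued function `R`, that is, `v ∈ ∂R(y)`. -/
def IsSubgradientAt (R : E → EReal) (v : StrongDual ℝ E) (y : E) : Prop :=
  ∀ u, R y + (v (u - y) : EReal) ≤ R u

theorem fderiv_sub_le_sub_of_convexOn (hf : ConvexOn ℝ s f) (hx : x ∈ s) (hy : y ∈ s)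
    (hfy : DifferentiableAt ℝ f y) : fderiv ℝ f y (x - y) ≤ f x - f y := by
  let line : ℝ →ᵃ[ℝ] E := AffineMap.lineMap y x
  have hconv : ConvexOn ℝ (line ⁻¹' s) (f ∘ line) := hf.comp_affineMap line
  have hderiv : HasDerivAt (f ∘ line) (fderiv ℝ f y (x - y)) 0 :=
    HasFDerivAt.comp_hasDerivAt 0 (by simpa [line] using hfy.hasFDerivAt)
      AffineMap.hasDerivAt_lineMap
  simpa [slope_def_field, line] using
    hconv.le_slope_of_hasDerivAt (by simpa [line]) (by simpa [line]) one_pos hderiv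

theorem bregmanDist_nonneg (hf : ConvexOn ℝ s f) (hx : x ∈ s) (hy : y ∈ s)
    (hfy : DifferentiableAt ℝ f y) : 0 ≤ bregmanDist f x y :=
  sub_nonneg.mpr (fderiv_sub_le_sub_of_convexOn hf hx hy hfy)

theorem bregmanDist_const_mul_sub (hf : DifferentiableAt ℝ f y) (hg : DifferentiableAt ℝ g y)
    (c : ℝ) :
    bregmanDist (fun z => c * f z - g z) x y = c * bregmanDist f x y - bregmanDist g x y := by
  simp only [bregmanDist, fderiv_fun_sub (hf.const_mul c) hg, fderiv_const_mul hf,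
    sub_apply, smul_apply, smul_eq_mul]
  ring

theorem bregmanDist_le_mul_bregmanDist {c : ℝ} (hfg : ConvexOn ℝ s fun z => c * f z - g z)
    (hx : x ∈ s) (hy : y ∈ s) (hf : DifferentiableAt ℝ f y) (hg : DifferentiableAt ℝ g y) :
    bregmanDist g x y ≤ c * bregmanDist f x y := by
  rw [← sub_nonneg, ← bregmanDist_const_mul_sub hf hg]
  exact bregmanDist_nonneg hfg hx hy ((hf.const_mul c).sub hg)

theorem bregmanDist_add_bregmanDist_swap (f : E → ℝ) (x y : E) :
    bregmanDist f x y + bregmanDist f y x = (fderiv ℝ f x - fderiv ℝ f y) (x - y) := by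
  rw [bregmanDist, bregmanDist, ← neg_sub x y, map_neg, sub_apply]
  ring

end BregmanDistance

section InnerProductSpace

variable {E : Type*} [NormedAddCommGroup E] [InnerProductSpace ℝ E] [CompleteSpace E]

theorem bregmanDist_eq_of_hasGradientAt {f : E → ℝ} {f' y : E} (hf : HasGradientAt f f' y)
    (x : E) : bregmanDist f x y = f x - f y - ⟪f', x - y⟫ := by
  rw [bregmanDist, hf.hasFDerivAt.fderiv, InnerProductSpace.toDual_apply_apply]

theorem isSubgradientAt_toDual_iff {R : E → EReal} {v y : E} :
    IsSubgradientAt R (InnerProductSpace.toDual ℝ E v) y ↔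
      ∀ u, R y + (⟪v, u - y⟫ : EReal) ≤ R u :=
  Iff.rfl

end InnerProductSpace

theorem sbpg_one_step_descent_general {E : Type*} [NormedAddCommGroup E] [NormedSpace ℝ E]
    {s : Set E} {φ F : E → ℝ} {R : E → EReal} {L α : ℝ} {x xp : E} {g : StrongDual ℝ E}
    (hφ : ∀ z ∈ s, DifferentiableAt ℝ φ z) (hF : DifferentiableAt ℝ F x)
    (hconv : ConvexOn ℝ s fun z => L * φ z - F z) (hα : α ≠ 0) (hx : x ∈ s) (hxp : xp ∈ s)
    (hsub : IsSubgradientAt R (α⁻¹ • (fderiv ℝ φ x - α • g - fderiv ℝ φ xp)) xp) :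
    (F xp : EReal) + R xp ≤
      ((F x - 1 / α * bregmanDist φ x xp - (1 / α - L) * bregmanDist φ xp x
          + (fderiv ℝ F x - g) (xp - x) : ℝ) : EReal) + R x := by
  set v := α⁻¹ • (fderiv ℝ φ x - α • g - fderiv ℝ φ xp)
  set b := F x - 1 / α * bregmanDist φ x xp - (1 / α - L) * bregmanDist φ xp x
    + (fderiv ℝ F x - g) (xp - x)
  have hv : v (x - xp) =
      1 / α * (bregmanDist φ x xp + bregmanDist φ xp x) + g (xp - x) := by
    rw [bregmanDist_add_bregmanDist_swap, ← neg_sub x xp, map_neg]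
    simp only [v, smul_apply, sub_apply, smul_eq_mul]
    field_simp
    ring
  have hFxp : F xp ≤ b + v (x - xp) := by
    have hD : F xp - F x - fderiv ℝ F x (xp - x) ≤ L * bregmanDist φ xp x :=
      bregmanDist_le_mul_bregmanDist hconv hxp hx (hφ x hx) hF
    simp only [hv, b, sub_apply]
    linarith
  calc (F xp : EReal) + R xp
      ≤ ((b + v (x - xp) : ℝ) : EReal) + R xp := by gcongr
    _ = b + (R xp + v (x - xp)) := by rw [EReal.coe_add, add_assoc, add_comm (R xp)]
    _ ≤ b + R x := by gcongr; exact hsub x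

/-- one-step descent lemma for the stochastic Bregman proximal gradient
update. With `ε = ∇F(x) − ∇̃` and `x⁺` the SBPG update,
`Φ(x⁺) ≤ Φ(x) − (1/α)D_φ(x, x⁺) − (1/α − L_F)D_φ(x⁺, x) + ⟨ε, x⁺ − x⟩`. -/
theorem sbpg_one_step_descent {d : ℕ}
    (φ F : EuclideanSpace ℝ (Fin d) → ℝ)
    (φ' F' : EuclideanSpace ℝ (Fin d) → EuclideanSpace ℝ (Fin d))
    (hφ_diff : ∀ z, HasGradientAt φ (φ' z) z)
    (hφ_conv : ConvexOn ℝ Set.univ φ)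
    (hF_diff : ∀ z, HasGradientAt F (F' z) z)
    (LF : ℝ)
    -- F is L_F-smooth adaptable with respect to φ on ℝ^d
    (hsa₁ : ConvexOn ℝ Set.univ (fun z => LF * φ z + F z))
    (hsa₂ : ConvexOn ℝ Set.univ (fun z => LF * φ z - F z))
    (R : EuclideanSpace ℝ (Fin d) → EReal)
    (hR_ne_top : ∃ z, R z ≠ ⊤) (hR_ne_bot : ∀ z, R z ≠ ⊥)
    (hR_conv : ∀ u v : EuclideanSpace ℝ (Fin d), ∀ t : ℝ, 0 ≤ t → t ≤ 1 →
      R (t • u + (1 - t) • v) ≤ (t : EReal) * R u + ((1 - t : ℝ) : EReal) * R v)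
    (α : ℝ) (hα : 0 < α)
    (x : EuclideanSpace ℝ (Fin d)) (hx : R x ≠ ⊤)
    (g : EuclideanSpace ℝ (Fin d))  -- the gradient estimator ∇̃
    (xp : EuclideanSpace ℝ (Fin d))
    -- ∇φ(x) − α∇̃ − ∇φ(x⁺) ∈ α ∂R(x⁺)
    (hxp : ∀ u, R xp +
        ((⟪α⁻¹ • (φ' x - α • g - φ' xp), u - xp⟫ : ℝ) : EReal) ≤ R u) :
    ((F xp : ℝ) : EReal) + R xp ≤
      ((F x - (1 / α) * (φ x - φ xp - ⟪φ' xp, x - xp⟫)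
          - (1 / α - LF) * (φ xp - φ x - ⟪φ' x, xp - x⟫)
          + ⟪F' x - g, xp - x⟫ : ℝ) : EReal) + R x := by
  have hsub : IsSubgradientAt R (α⁻¹ • (fderiv ℝ φ x - α • InnerProductSpace.toDual ℝ _ g -
      fderiv ℝ φ xp)) xp := by
    simpa only [(hφ_diff _).hasFDerivAt.fderiv, ← map_smul, ← map_sub, isSubgradientAt_toDual_iff]
      using hxp
  simpa only [bregmanDist_eq_of_hasGradientAt (hφ_diff _), (hF_diff x).hasFDerivAt.fderiv,
    ← map_sub, InnerProductSpace.toDual_apply_apply] using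
    sbpg_one_step_descent_general (fun z _ => (hφ_diff z).differentiableAt)
      (hF_diff x).differentiableAt hsa₂ hα.ne' (Set.mem_univ x) (Set.mem_univ xp) hsub
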